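/- Minimum length of capacity achieving ULDCs (Theorem 2): for all integers N ≥ 2 and K ≥ 1, the minimum code length M for which there exists a universal locally decodable code (ULDC) with locality N, K source symbols, M coded symbols, and symbol rate R_s = C*(N,K), equals N^K. -/

import Mathlib

open scoped BigOperators

noncomputable section

/-- A finite probability space: a finite type together with a probability mass function. -/
structure FinProbSpace where
  Ω : Type
  [fin : Fintype Ω]
  p : Ω → ℝ
  nonneg : ∀ ω, 0 ≤ p ω
  sum_one : ∑ ω, p ω = 1

attribute [instance] FinProbSpace.fin

namespace FinProbSpace

variable (P : FinProbSpace)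

/-- Probability that the random variable `X` takes the value `a`. -/
def prob {α : Type} [DecidableEq α] (X : P.Ω → α) (a : α) : ℝ :=
  ∑ ω, if X ω = a then P.p ω else 0

/-- Shannon entropy (in bits) of a finitely valued random variable. -/
def H {α : Type} [Fintype α] [DecidableEq α] (X : P.Ω → α) : ℝ :=
  ∑ a, -(P.prob X a * Real.logb 2 (P.prob X a))

/-- Conditional Shannon entropy `H(X | Y) = H(X, Y) - H(Y)` (in bits). -/
def condH {α β : Type} [Fintype α] [DecidableEq α] [Fintype β] [DecidableEq β]
    (X : P.Ω → α) (Y : P.Ω → β) : ℝ :=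
  P.H (fun ω => (X ω, Y ω)) - P.H Y

/-- The tuple random variable `(X_i)_{i ∈ ι}`. -/
def tuple {ι V : Type} (X : ι → P.Ω → V) : P.Ω → ι → V := fun ω i => X i ω

/-- Joint (mutual) independence of a finite family of random variables. -/
def iIndep {ι V : Type} [Fintype ι] [DecidableEq ι] [DecidableEq V] (X : ι → P.Ω → V) : Prop :=
  ∀ a : ι → V, P.prob (P.tuple X) a = ∏ i, P.prob (X i) (a i)

/-- `X` and `Y` contain the same information about everything beyond `Z`:
`H(X | Y, Z) = H(Y | X, Z) = 0`. -/
def sameInfo {α β γ : Type} [Fintype α] [DecidableEq α] [Fintype β] [DecidableEq β]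
    [Fintype γ] [DecidableEq γ] (X : P.Ω → α) (Y : P.Ω → β) (Z : P.Ω → γ) : Prop :=
  P.condH X (fun ω => (Y ω, Z ω)) = 0 ∧ P.condH Y (fun ω => (X ω, Z ω)) = 0

end FinProbSpace

/-- A locally decodable code with `K` source symbols of entropy `Lw`, `M` coded symbols of
entropy `Lx`, and locality `N`. -/
structure LDC (K N M : ℕ) (Lw Lx : ℝ) where
  P : FinProbSpace
  V : Type
  [fV : Fintype V]
  [dV : DecidableEq V]
  V' : Type
  [fV' : Fintype V']
  [dV' : DecidableEq V']
  /-- the source symbols -/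
  W : Fin K → P.Ω → V
  /-- the coded symbols -/
  X : Fin M → P.Ω → V'
  indep : P.iIndep W
  HW : ∀ k, P.H (W k) = Lw
  coded_fn : ∀ m, ∃ f : (Fin K → V) → V', ∀ ω, X m ω = f (fun k => W k ω)
  HX : ∀ m, P.H (X m) = Lx
  /-- the decoding supersets -/
  decSets : Fin K → Finset (Finset (Fin M))
  decSets_nonempty : ∀ k, (decSets k).Nonempty
  decSets_card : ∀ k, ∀ s ∈ decSets k, s.card = N
  decodes : ∀ k, ∀ s ∈ decSets k,
    P.condH (W k) (P.tuple fun i : {x // x ∈ s} => X i.1) = 0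

attribute [instance] LDC.fV LDC.dV LDC.fV' LDC.dV'

/-- A universal LDC: every coded symbol appears in some decoding set of every source symbol. -/
def LDC.IsUniversal {K N M : ℕ} {Lw Lx : ℝ} (C : LDC K N M Lw Lx) : Prop :=
  ∀ (m : Fin M) (k : Fin K), ∃ s ∈ C.decSets k, m ∈ s

/-- A perfectly smooth LDC: for each source symbol, every coded symbol lies in the same
number of decoding sets. -/
def LDC.IsSmooth {K N M : ℕ} {Lw Lx : ℝ} (C : LDC K N M Lw Lx) : Prop :=
  ∀ (k : Fin K) (m m' : Fin M),
    ((C.decSets k).filter (fun s => m ∈ s)).card =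
      ((C.decSets k).filter (fun s => m' ∈ s)).card

/-- `C*(N, K) = N (1 + 1/N + ⋯ + 1/N^{K-1})⁻¹`. -/
def Cstar (N K : ℕ) : ℝ := N / (∑ j ∈ Finset.range K, (1 / (N : ℝ)) ^ j)

/-- An `N`-query information retrieval scheme with `K` messages of entropy `Lw` and
answer sets of sizes `Mn n` with answers of entropy `Lx`. -/
structure IRScheme (K N : ℕ) (Mn : Fin N → ℕ) (Lw Lx : ℝ) where
  P : FinProbSpace
  V : Type
  [fV : Fintype V]
  [dV : DecidableEq V]
  V' : Type
  [fV' : Fintype V']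
  [dV' : DecidableEq V']
  /-- the messages -/
  W : Fin K → P.Ω → V
  /-- `A n m` is the `m`-th possible answer of database `n` -/
  A : (n : Fin N) → Fin (Mn n) → P.Ω → V'
  indep : P.iIndep W
  HW : ∀ k, P.H (W k) = Lw
  ans_fn : ∀ n m, ∃ f : (Fin K → V) → V', ∀ ω, A n m ω = f (fun k => W k ω)
  HA : ∀ n m, P.H (A n m) = Lx
  /-- the decoding supersets: each decoding set consists of one answer index per database -/
  Q : Fin K → Finset ((n : Fin N) → Fin (Mn n))
  Q_nonempty : ∀ k, (Q k).Nonempty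
  decodes : ∀ k, ∀ q ∈ Q k, P.condH (W k) (P.tuple fun n => A n (q n)) = 0

attribute [instance] IRScheme.fV IRScheme.dV IRScheme.fV' IRScheme.dV'

/-- A repudiative (RIR_max) scheme: every possible answer of every database appears in some
decoding set of every message. -/
def IRScheme.IsRIR {K N : ℕ} {Mn : Fin N → ℕ} {Lw Lx : ℝ} (C : IRScheme K N Mn Lw Lx) : Prop :=
  ∀ (n : Fin N) (m : Fin (Mn n)) (k : Fin K), ∃ q ∈ C.Q k, q n = m

/-- A perfectly private (PIR_max) scheme: for each message there is a distribution on its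
decoding sets such that the marginal distribution of the query to each database does not
depend on the message. -/
def IRScheme.IsPIR {K N : ℕ} {Mn : Fin N → ℕ} {Lw Lx : ℝ} (C : IRScheme K N Mn Lw Lx) : Prop :=
  ∃ μ : Fin K → ((n : Fin N) → Fin (Mn n)) → ℝ,
    (∀ k q, 0 ≤ μ k q) ∧ (∀ k, ∑ q ∈ C.Q k, μ k q = 1) ∧
    (∀ (k k' : Fin K) (n : Fin N) (m : Fin (Mn n)),
      ∑ q ∈ (C.Q k).filter (fun q => q n = m), μ k q =
        ∑ q ∈ (C.Q k').filter (fun q => q n = m), μ k' q)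

/-- `C_K(N) = (1 + 1/N + ⋯ + 1/N^{K-1})⁻¹`, the capacity of PIR. -/
def CK (N K : ℕ) : ℝ := (∑ j ∈ Finset.range K, (1 / (N : ℝ)) ^ j)⁻¹

/-!
Write `L_d = L_w / C*(N, d)`, so that `N L_{d+1} = L_w + L_d`. If `S` decodes `W_k` and `k ∉ T`,
the chain rule gives `H(X_S | W_T) = L_w + H(X_S | W_{T ∪ {k}})`. In a universal code of symbol rate
`C*(N, K)`, adding source symbols to `T` one at a time yields `H(X_m | W_T) ≤ L_{K - |T|}`, and
removing them again, starting from `H(X_m | W_1, …, W_K) = 0 = L_0`, yields the reverse inequality.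
Hence the symbols of `S` are independent given `W_T` but determine one another given
`W_{T ∪ {k}}`. The number of classes of coded symbols that determine one another given `W_T`
therefore grows at least by a factor `N` each time a source symbol is removed from `T`.

Conversely, index the coded symbols by the points of a grid `G ^ K` with `|G| = N`, and let the
symbol at `q` be the sum over `k` of the bit of `W_k` at position `q k`, the bit at position `0`
being `0`; two points on a line in direction `k` then reveal a bit of `W_k`. The symbol at the
origin is constant, so one uses an independent copy of this code for each translation of the grid.
Every coded symbol then consists of `N ^ K - 1` independent bits, and every source symbol of
`N ^ K (N - 1)`.
-/

namespace FinProbSpace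

variable (P : FinProbSpace)

section Entropy

/-- The block containing `ω` of the partition of the sample space given by `r`. -/
def block (r : Setoid P.Ω) (ω : P.Ω) : Finset P.Ω :=
  open Classical in {ω' | r ω ω'}

/-- The probability of the block of `r` containing `ω`. -/
def blockProb (r : Setoid P.Ω) (ω : P.Ω) : ℝ :=
  ∑ ω' ∈ P.block r ω, P.p ω'

/-- Shannon entropy (in bits) of a partition of the sample space, as the expectation of
`-log₂` of the probability of the block that occurs. A random variable `X` enters through the
partition `Setoid.ker X` into its fibres, and `⊓` of partitions stands for joint variables. -/
def entropy (r : Setoid P.Ω) : ℝ :=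
  ∑ ω, -(P.p ω * Real.logb 2 (P.blockProb r ω))

/-- The conditional entropy `H(r | s)` of partitions of the sample space. -/
def condEntropy (r s : Setoid P.Ω) : ℝ :=
  P.entropy (r ⊓ s) - P.entropy s

variable {P} {r s t : Setoid P.Ω}

@[simp] theorem mem_block {ω ω' : P.Ω} : ω' ∈ P.block r ω ↔ r ω ω' := by
  simp [block]

theorem block_eq_of_rel {ω ω' : P.Ω} (h : r ω ω') : P.block r ω = P.block r ω' := by
  ext ω''
  simpa only [mem_block] using ⟨r.trans' (r.symm' h), r.trans' h⟩

theorem blockProb_eq_of_rel {ω ω' : P.Ω} (h : r ω ω') : P.blockProb r ω = P.blockProb r ω' := by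
  rw [blockProb, blockProb, block_eq_of_rel h]

theorem blockProb_nonneg (r : Setoid P.Ω) (ω : P.Ω) : 0 ≤ P.blockProb r ω :=
  Finset.sum_nonneg fun ω' _ => P.nonneg ω'

theorem blockProb_pos (r : Setoid P.Ω) {ω : P.Ω} (hω : 0 < P.p ω) : 0 < P.blockProb r ω :=
  hω.trans_le <| Finset.single_le_sum (fun ω' _ => P.nonneg ω') (mem_block.2 (r.refl' ω))

theorem blockProb_mono (h : r ≤ s) (ω : P.Ω) : P.blockProb r ω ≤ P.blockProb s ω :=
  Finset.sum_le_sum_of_subset_of_nonneg (fun _ hω' => mem_block.2 (h (mem_block.1 hω')))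
    fun ω' _ _ => P.nonneg ω'

theorem prob_eq_sum_filter {α : Type} [DecidableEq α] (X : P.Ω → α) (a : α) :
    P.prob X a = ∑ ω with X ω = a, P.p ω :=
  (Finset.sum_filter _ _).symm

theorem blockProb_ker {α : Type} [DecidableEq α] (X : P.Ω → α) (ω : P.Ω) :
    P.blockProb (Setoid.ker X) ω = P.prob X (X ω) := by
  rw [prob_eq_sum_filter, blockProb]
  congr 1
  ext ω'
  simp [Setoid.ker_def, eq_comm]

theorem H_eq_entropy_ker {α : Type} [Fintype α] [DecidableEq α] (X : P.Ω → α) :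
    P.H X = P.entropy (Setoid.ker X) := by
  rw [entropy, ← Finset.sum_fiberwise _ X]
  refine Finset.sum_congr rfl fun a _ => ?_
  calc -(P.prob X a * Real.logb 2 (P.prob X a))
      = ∑ ω with X ω = a, -(P.p ω * Real.logb 2 (P.prob X a)) := by
        rw [Finset.sum_neg_distrib, ← Finset.sum_mul, ← prob_eq_sum_filter]
    _ = ∑ ω with X ω = a, -(P.p ω * Real.logb 2 (P.blockProb (Setoid.ker X) ω)) :=
        Finset.sum_congr rfl fun ω hω => by
          rw [blockProb_ker, (Finset.mem_filter.1 hω).2]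

theorem condH_eq_condEntropy_ker {α β : Type} [Fintype α] [DecidableEq α] [Fintype β]
    [DecidableEq β] (X : P.Ω → α) (Y : P.Ω → β) :
    P.condH X Y = P.condEntropy (Setoid.ker X) (Setoid.ker Y) := by
  have hpair : Setoid.ker (fun ω => (X ω, Y ω)) = Setoid.ker X ⊓ Setoid.ker Y := by
    ext ω ω'
    simp [Setoid.inf_iff_and, Setoid.ker_def]
  rw [condH, condEntropy, H_eq_entropy_ker, H_eq_entropy_ker, hpair]

theorem entropy_anti (h : r ≤ s) : P.entropy s ≤ P.entropy r := by
  refine Finset.sum_le_sum fun ω _ => neg_le_neg ?_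
  rcases (P.nonneg ω).eq_or_lt with hω | hω
  · simp [← hω]
  · exact mul_le_mul_of_nonneg_left
      (Real.logb_le_logb_of_le one_lt_two (blockProb_pos r hω) (blockProb_mono h ω)) hω.le

theorem entropy_top : P.entropy ⊤ = 0 := by
  have hprob (ω : P.Ω) : P.blockProb ⊤ ω = 1 := by
    simp [blockProb, block, Setoid.top_def, P.sum_one]
  simp [entropy, hprob]

theorem sum_block_div_blockProb_le_one (r : Setoid P.Ω) (ω₀ : P.Ω) :
    ∑ ω ∈ P.block r ω₀, P.p ω / P.blockProb r ω ≤ 1 :=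
  calc ∑ ω ∈ P.block r ω₀, P.p ω / P.blockProb r ω
      = ∑ ω ∈ P.block r ω₀, P.p ω / P.blockProb r ω₀ :=
        Finset.sum_congr rfl fun ω hω => by rw [blockProb_eq_of_rel (mem_block.1 hω)]
    _ = P.blockProb r ω₀ / P.blockProb r ω₀ := by rw [← Finset.sum_div, blockProb]
    _ ≤ 1 := div_self_le_one _

theorem sum_inter_block_div_blockProb_le_one [DecidableEq P.Ω] (r s : Setoid P.Ω) (a b : P.Ω) :
    ∑ ω ∈ P.block r a ∩ P.block s b, P.p ω / P.blockProb (r ⊓ s) ω ≤ 1 := by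
  rcases (P.block r a ∩ P.block s b).eq_empty_or_nonempty with hempty | ⟨ω₀, hω₀⟩
  · simp [hempty]
  · have hblock : P.block r a ∩ P.block s b = P.block (r ⊓ s) ω₀ := by
      rw [Finset.mem_inter, mem_block, mem_block] at hω₀
      rw [block_eq_of_rel hω₀.1, block_eq_of_rel hω₀.2]
      ext ω
      rw [Finset.mem_inter, mem_block, mem_block, mem_block]
      exact Iff.rfl
    exact hblock ▸ sum_block_div_blockProb_le_one (r ⊓ s) ω₀

/- Expand `P(r) P(s)` as a sum over pairs of points `a`, `b` and sum over `ω` first: `ω` then ranges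
over a block of `r ⊓ s`. -/
theorem sum_blockProb_ratio_eq [DecidableEq P.Ω] (hr : r ≤ t) (hs : s ≤ t) :
    ∑ ω, P.p ω * (P.blockProb r ω * P.blockProb s ω /
      (P.blockProb (r ⊓ s) ω * P.blockProb t ω)) =
    ∑ a, ∑ b ∈ P.block t a, P.p a * P.p b / P.blockProb t a *
      ∑ ω ∈ P.block r a ∩ P.block s b, P.p ω / P.blockProb (r ⊓ s) ω := by
  calc ∑ ω, P.p ω * (P.blockProb r ω * P.blockProb s ω /
        (P.blockProb (r ⊓ s) ω * P.blockProb t ω))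
      = ∑ ω, ∑ a ∈ P.block r ω, ∑ b ∈ P.block s ω,
          P.p a * P.p b / P.blockProb t a * (P.p ω / P.blockProb (r ⊓ s) ω) := by
        refine Finset.sum_congr rfl fun ω _ => ?_
        have hprod : P.blockProb r ω * P.blockProb s ω =
            ∑ a ∈ P.block r ω, ∑ b ∈ P.block s ω, P.p a * P.p b :=
          Finset.sum_mul_sum _ _ _ _
        rw [hprod, Finset.sum_div, Finset.mul_sum]
        refine Finset.sum_congr rfl fun a ha => ?_
        rw [Finset.sum_div, Finset.mul_sum, blockProb_eq_of_rel (hr (mem_block.1 ha))]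
        exact Finset.sum_congr rfl fun b _ => by ring
    _ = ∑ a, ∑ b ∈ P.block t a, P.p a * P.p b / P.blockProb t a *
          ∑ ω ∈ P.block r a ∩ P.block s b, P.p ω / P.blockProb (r ⊓ s) ω := by
        rw [Finset.sum_comm' (t' := Finset.univ) (s' := P.block r)
          (by simp [Setoid.comm'])]
        refine Finset.sum_congr rfl fun a _ => ?_
        rw [Finset.sum_comm' (t' := P.block t a) (s' := fun b => P.block r a ∩ P.block s b)]
        · simp only [Finset.mul_sum]
        · intro ω b
          simp only [mem_block, Finset.mem_inter, s.comm' (x := b)]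
          exact ⟨fun h => ⟨h, t.trans' (hr h.1) (hs h.2)⟩, And.left⟩

theorem sum_blockProb_ratio_le_one (hr : r ≤ t) (hs : s ≤ t) :
    ∑ ω, P.p ω * (P.blockProb r ω * P.blockProb s ω /
      (P.blockProb (r ⊓ s) ω * P.blockProb t ω)) ≤ 1 := by
  classical
  rw [sum_blockProb_ratio_eq hr hs]
  calc ∑ a, ∑ b ∈ P.block t a, P.p a * P.p b / P.blockProb t a *
        ∑ ω ∈ P.block r a ∩ P.block s b, P.p ω / P.blockProb (r ⊓ s) ω
      ≤ ∑ a, ∑ b ∈ P.block t a, P.p a * P.p b / P.blockProb t a := by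
        refine Finset.sum_le_sum fun a _ => Finset.sum_le_sum fun b _ => ?_
        exact mul_le_of_le_one_right
          (div_nonneg (mul_nonneg (P.nonneg a) (P.nonneg b)) (blockProb_nonneg t a))
          (sum_inter_block_div_blockProb_le_one r s a b)
    _ = ∑ a, P.p a * (P.blockProb t a / P.blockProb t a) := by
        refine Finset.sum_congr rfl fun a _ => ?_
        rw [← Finset.sum_div, ← Finset.mul_sum, mul_div_assoc, ← blockProb]
    _ ≤ ∑ a, P.p a :=
        Finset.sum_le_sum fun a _ => mul_le_of_le_one_right (P.nonneg a) (div_self_le_one _)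
    _ = 1 := P.sum_one

theorem entropy_inf_add_entropy_le (hr : r ≤ t) (hs : s ≤ t) :
    P.entropy (r ⊓ s) + P.entropy t ≤ P.entropy r + P.entropy s := by
  let ratio (ω : P.Ω) : ℝ :=
    P.blockProb r ω * P.blockProb s ω / (P.blockProb (r ⊓ s) ω * P.blockProb t ω)
  have hdiff : P.entropy (r ⊓ s) + P.entropy t - (P.entropy r + P.entropy s) =
      (∑ ω, P.p ω * Real.log (ratio ω)) / Real.log 2 := by
    simp only [entropy, Finset.sum_div, ← Finset.sum_add_distrib, ← Finset.sum_sub_distrib]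
    refine Finset.sum_congr rfl fun ω _ => ?_
    rcases (P.nonneg ω).eq_or_lt with hω | hω
    · simp [← hω]
    · have hpos (u : Setoid P.Ω) := (blockProb_pos u hω).ne'
      rw [Real.log_div (mul_ne_zero (hpos r) (hpos s)) (mul_ne_zero (hpos _) (hpos t)),
        Real.log_mul (hpos r) (hpos s), Real.log_mul (hpos _) (hpos t)]
      simp only [Real.logb]
      ring
  have hgibbs : ∑ ω, P.p ω * Real.log (ratio ω) ≤ 0 :=
    calc ∑ ω, P.p ω * Real.log (ratio ω)
        ≤ ∑ ω, P.p ω * (ratio ω - 1) := by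
          refine Finset.sum_le_sum fun ω _ => ?_
          rcases (P.nonneg ω).eq_or_lt with hω | hω
          · simp [← hω]
          · have hpos (u : Setoid P.Ω) := blockProb_pos u hω
            exact mul_le_mul_of_nonneg_left (Real.log_le_sub_one_of_pos
              (div_pos (mul_pos (hpos r) (hpos s)) (mul_pos (hpos _) (hpos t)))) hω.le
      _ = ∑ ω, P.p ω * ratio ω - 1 := by
          simp only [mul_sub, mul_one, Finset.sum_sub_distrib, P.sum_one]
      _ ≤ 0 := sub_nonpos.2 (sum_blockProb_ratio_le_one hr hs)
  rw [← sub_nonpos, hdiff]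
  exact div_nonpos_of_nonpos_of_nonneg hgibbs (Real.log_nonneg one_le_two)

end Entropy

section CondEntropy

variable {P} {r r' s s' : Setoid P.Ω}

theorem condEntropy_nonneg (r s : Setoid P.Ω) : 0 ≤ P.condEntropy r s :=
  sub_nonneg.2 (entropy_anti inf_le_right)

theorem condEntropy_anti_left (h : r ≤ r') (s : Setoid P.Ω) :
    P.condEntropy r' s ≤ P.condEntropy r s :=
  sub_le_sub_right (entropy_anti (inf_le_inf_right s h)) _

theorem condEntropy_mono_right (r : Setoid P.Ω) (h : s ≤ s') :
    P.condEntropy r s ≤ P.condEntropy r s' := by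
  have hsub := entropy_inf_add_entropy_le (inf_le_right : r ⊓ s' ≤ s') h
  rw [inf_assoc, inf_eq_right.2 h] at hsub
  rw [condEntropy, condEntropy]
  linarith

theorem condEntropy_eq_zero_of_le (h : s ≤ r) : P.condEntropy r s = 0 := by
  rw [condEntropy, inf_eq_right.2 h, sub_self]

theorem condEntropy_top_right (r : Setoid P.Ω) : P.condEntropy r ⊤ = P.entropy r := by
  rw [condEntropy, inf_top_eq, entropy_top, sub_zero]

theorem condEntropy_top_left (s : Setoid P.Ω) : P.condEntropy ⊤ s = 0 :=
  condEntropy_eq_zero_of_le le_top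

theorem condEntropy_inf (r r' s : Setoid P.Ω) :
    P.condEntropy (r ⊓ r') s = P.condEntropy r s + P.condEntropy r' (r ⊓ s) := by
  rw [condEntropy, condEntropy, condEntropy, inf_left_comm, ← inf_assoc]
  ring

theorem condEntropy_inf_le (r r' s : Setoid P.Ω) :
    P.condEntropy (r ⊓ r') s ≤ P.condEntropy r s + P.condEntropy r' s := by
  rw [condEntropy_inf]
  exact add_le_add_right (condEntropy_mono_right r' inf_le_right) _

variable {ι : Type*} {X : ι → Setoid P.Ω} {A B : Finset ι}

theorem condEntropy_finset_inf_le_sum (X : ι → Setoid P.Ω) (s : Setoid P.Ω) (A : Finset ι) :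
    P.condEntropy (A.inf X) s ≤ ∑ i ∈ A, P.condEntropy (X i) s := by
  classical
  induction A using Finset.induction_on with
  | empty => simp [condEntropy_top_left]
  | insert i A hi ih =>
    rw [Finset.inf_insert, Finset.sum_insert hi]
    exact (condEntropy_inf_le _ _ _).trans (add_le_add_right ih _)

theorem condEntropy_finset_inf_eq_sum_of_subset (hAB : A ⊆ B)
    (hB : ∑ i ∈ B, P.condEntropy (X i) s ≤ P.condEntropy (B.inf X) s) :
    P.condEntropy (A.inf X) s = ∑ i ∈ A, P.condEntropy (X i) s := by
  classical
  refine (condEntropy_finset_inf_le_sum X s A).antisymm ?_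
  have hsplit : P.condEntropy (B.inf X) s ≤
      P.condEntropy ((B \ A).inf X) s + P.condEntropy (A.inf X) s := by
    conv_lhs => rw [← Finset.sdiff_union_of_subset hAB, Finset.inf_union]
    exact condEntropy_inf_le _ _ _
  have hsum := Finset.sum_sdiff (f := fun i => P.condEntropy (X i) s) hAB
  linarith [condEntropy_finset_inf_le_sum X s (B \ A)]

/-- Two partitions are related when they carry the same information beyond `s`; this is
`FinProbSpace.sameInfo` for partitions. -/
def sameInfoSetoid (s : Setoid P.Ω) : Setoid (Setoid P.Ω) where
  r r₁ r₂ := P.condEntropy r₁ (r₂ ⊓ s) = 0 ∧ P.condEntropy r₂ (r₁ ⊓ s) = 0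
  iseqv := by
    have htrans {r₁ r₂ r₃ : Setoid P.Ω} (h₁₂ : P.condEntropy r₁ (r₂ ⊓ s) = 0)
        (h₂₃ : P.condEntropy r₂ (r₃ ⊓ s) = 0) : P.condEntropy r₁ (r₃ ⊓ s) = 0 := by
      refine le_antisymm ?_ (condEntropy_nonneg _ _)
      calc P.condEntropy r₁ (r₃ ⊓ s)
          ≤ P.condEntropy (r₂ ⊓ r₁) (r₃ ⊓ s) := condEntropy_anti_left inf_le_right _
        _ = P.condEntropy r₂ (r₃ ⊓ s) + P.condEntropy r₁ (r₂ ⊓ (r₃ ⊓ s)) :=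
            condEntropy_inf _ _ _
        _ ≤ 0 + P.condEntropy r₁ (r₂ ⊓ s) :=
            add_le_add h₂₃.le (condEntropy_mono_right _ (inf_le_inf_left _ inf_le_right))
        _ = 0 := by rw [h₁₂, add_zero]
    exact ⟨fun r => ⟨condEntropy_eq_zero_of_le inf_le_left, condEntropy_eq_zero_of_le inf_le_left⟩,
      And.symm, fun h₁₂ h₂₃ => ⟨htrans h₁₂.1 h₂₃.1, htrans h₂₃.2 h₁₂.2⟩⟩

theorem sameInfoSetoid_anti (h : s ≤ s') : sameInfoSetoid s' ≤ sameInfoSetoid s := by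
  have hzero {r₁ r₂ : Setoid P.Ω} (h₀ : P.condEntropy r₁ (r₂ ⊓ s') = 0) :
      P.condEntropy r₁ (r₂ ⊓ s) = 0 :=
    le_antisymm (h₀ ▸ condEntropy_mono_right r₁ (inf_le_inf_left r₂ h)) (condEntropy_nonneg _ _)
  exact fun _ _ hr => ⟨hzero hr.1, hzero hr.2⟩

theorem sameInfoSetoid_of_condEntropy_le
    (hA : ∀ i ∈ A, P.condEntropy (A.inf X) s ≤ P.condEntropy (X i) s) {i j : ι} (hi : i ∈ A)
    (hj : j ∈ A) : sameInfoSetoid s (X i) (X j) := by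
  have hzero {i j : ι} (hi : i ∈ A) (hj : j ∈ A) : P.condEntropy (X i) (X j ⊓ s) = 0 := by
    refine le_antisymm ?_ (condEntropy_nonneg _ _)
    have hpair : P.condEntropy (X j ⊓ X i) s ≤ P.condEntropy (A.inf X) s :=
      condEntropy_anti_left (le_inf (Finset.inf_le hj) (Finset.inf_le hi)) s
    rw [condEntropy_inf] at hpair
    linarith [hA j hj]
  exact ⟨hzero hi hj, hzero hj hi⟩

theorem condEntropy_right_inf_eq_of_sum_le
    (hA : ∑ i ∈ A, P.condEntropy (X i) s ≤ P.condEntropy (A.inf X) s) {i j : ι} (hi : i ∈ A)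
    (hj : j ∈ A) (hij : i ≠ j) : P.condEntropy (X i) (X j ⊓ s) = P.condEntropy (X i) s := by
  classical
  have hpair := condEntropy_finset_inf_eq_sum_of_subset
    (Finset.insert_subset hj (Finset.singleton_subset_iff.2 hi)) hA
  rw [Finset.inf_insert, Finset.inf_singleton, Finset.sum_pair hij.symm, condEntropy_inf] at hpair
  exact add_left_cancel hpair

end CondEntropy

section Independence

variable {P} {ι V : Type} {X : ι → P.Ω → V}

theorem finset_inf_ker_rel (X : ι → P.Ω → V) (A : Finset ι) (ω ω' : P.Ω) :
    A.inf (fun i => Setoid.ker (X i)) ω ω' ↔ ∀ i ∈ A, X i ω = X i ω' := by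
  classical
  induction A using Finset.induction_on with
  | empty => exact iff_of_true trivial (by simp)
  | insert i A _ ih =>
    rw [Finset.inf_insert, Finset.forall_mem_insert]
    exact and_congr Iff.rfl ih

theorem ker_tuple_coe (X : ι → P.Ω → V) (A : Finset ι) :
    Setoid.ker (P.tuple fun i : {i // i ∈ A} => X i) = A.inf fun i => Setoid.ker (X i) := by
  ext ω ω'
  simp [finset_inf_ker_rel, Setoid.ker_def, tuple, funext_iff]

variable [Fintype ι]

theorem ker_tuple (X : ι → P.Ω → V) :
    Setoid.ker (P.tuple X) = Finset.univ.inf fun i => Setoid.ker (X i) := by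
  ext ω ω'
  simp [finset_inf_ker_rel, Setoid.ker_def, tuple, funext_iff]

variable [DecidableEq ι] [DecidableEq V]

theorem entropy_ker_tuple_of_iIndep (hX : P.iIndep X) :
    P.entropy (Setoid.ker (P.tuple X)) = ∑ i, P.entropy (Setoid.ker (X i)) := by
  simp only [entropy]
  rw [Finset.sum_comm]
  refine Finset.sum_congr rfl fun ω _ => ?_
  rcases (P.nonneg ω).eq_or_lt with hω | hω
  · simp [← hω]
  · have hprod : P.blockProb (Setoid.ker (P.tuple X)) ω =
        ∏ i, P.blockProb (Setoid.ker (X i)) ω := by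
      simp only [blockProb_ker]
      exact hX _
    rw [hprod, Real.logb_prod _ _ fun i _ => (blockProb_pos _ hω).ne', Finset.mul_sum,
      Finset.sum_neg_distrib]

theorem condEntropy_finset_inf_of_iIndep (hX : P.iIndep X) {A : Finset ι} {i : ι} (hi : i ∉ A) :
    P.condEntropy (Setoid.ker (X i)) (A.inf fun j => Setoid.ker (X j)) =
      P.entropy (Setoid.ker (X i)) := by
  have hsum (B : Finset ι) : P.entropy (B.inf fun j => Setoid.ker (X j)) =
      ∑ j ∈ B, P.entropy (Setoid.ker (X j)) := by
    simp only [← condEntropy_top_right]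
    refine condEntropy_finset_inf_eq_sum_of_subset B.subset_univ ?_
    simp only [condEntropy_top_right]
    rw [← ker_tuple, entropy_ker_tuple_of_iIndep hX]
  have hinsert : Setoid.ker (X i) ⊓ A.inf (fun j => Setoid.ker (X j)) =
      (insert i A).inf fun j => Setoid.ker (X j) :=
    (Finset.inf_insert (f := fun j => Setoid.ker (X j))).symm
  rw [condEntropy, hinsert, hsum, hsum, Finset.sum_insert hi, add_sub_cancel_right]

end Independence

end FinProbSpace

theorem mul_card_quotient_le {α : Type*} [Finite α] {r s : Setoid α} (hrs : r ≤ s) {n : ℕ}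
    (h : ∀ a, ∃ B : Finset α, B.card = n ∧ (∀ b ∈ B, s a b) ∧
      ∀ b ∈ B, ∀ b' ∈ B, r b b' → b = b') :
    n * Nat.card (Quotient s) ≤ Nat.card (Quotient r) := by
  classical
  have := Fintype.ofFinite (Quotient r)
  have := Fintype.ofFinite (Quotient s)
  rw [Nat.card_eq_fintype_card, Nat.card_eq_fintype_card]
  refine Finset.mul_card_image_le_card_of_maps_to (f := Setoid.map_of_le hrs)
    (fun _ _ => Finset.mem_univ _) n fun q _ => ?_
  induction q using Quotient.inductionOn with | _ a
  obtain ⟨B, rfl, hBs, hBr⟩ := h a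
  rw [← Finset.card_image_of_injOn fun b hb b' hb' hbb' => hBr b hb b' hb' (Quotient.exact hbb')]
  refine Finset.card_le_card fun q hq => ?_
  obtain ⟨b, hb, rfl⟩ := Finset.mem_image.1 hq
  exact Finset.mem_filter.2 ⟨Finset.mem_univ _, Quotient.sound (s.symm' (hBs b hb))⟩

/- For `d = 0` this relies on the junk value `Cstar N 0 = N / 0 = 0`, which makes the last term
vanish. -/
theorem mul_div_Cstar_succ {N : ℕ} (hN : 0 < N) (L : ℝ) (d : ℕ) :
    N * (L / Cstar N (d + 1)) = L + L / Cstar N d := by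
  have hN' : (N : ℝ) ≠ 0 := Nat.cast_ne_zero.2 hN.ne'
  simp only [Cstar, div_div_eq_mul_div]
  rw [Finset.sum_range_succ']
  simp only [pow_succ, ← Finset.sum_mul]
  field_simp
  ring

theorem Cstar_pos {N d : ℕ} (hN : 0 < N) (hd : 0 < d) : 0 < Cstar N d := by
  have hN' : (0 : ℝ) < N := Nat.cast_pos.2 hN
  exact div_pos hN' (Finset.sum_pos (fun j _ => by positivity) (Finset.nonempty_range_iff.2 hd.ne'))

namespace LDC

variable {K N M : ℕ} {Lw Lx : ℝ} (C : LDC K N M Lw Lx)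

/-- The information carried by the source symbol `W_k`. For `T : Finset (Fin K)` the side
information `W_T` is `T.inf C.source`. -/
def source (k : Fin K) : Setoid C.P.Ω :=
  Setoid.ker (C.W k)

/-- The information carried by the coded symbol `X_m`. For `S : Finset (Fin M)` the joint
coded symbol `X_S` is `S.inf C.coded`. -/
def coded (m : Fin M) : Setoid C.P.Ω :=
  Setoid.ker (C.X m)

/-- Coded symbols are related when, given the source symbols in `T`, they determine each
other. -/
def sameInfo (T : Finset (Fin K)) : Setoid (Fin M) :=
  (FinProbSpace.sameInfoSetoid (T.inf C.source)).comap C.coded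

variable {C} {T : Finset (Fin K)} {S : Finset (Fin M)} {k : Fin K} {m : Fin M}

theorem entropy_coded (m : Fin M) : C.P.entropy (C.coded m) = Lx := by
  rw [coded, ← FinProbSpace.H_eq_entropy_ker, C.HX]

theorem condEntropy_source (hk : k ∉ T) : C.P.condEntropy (C.source k) (T.inf C.source) = Lw :=
  (FinProbSpace.condEntropy_finset_inf_of_iIndep C.indep hk).trans <| by
    rw [← FinProbSpace.H_eq_entropy_ker, C.HW]

theorem univ_inf_source_le_coded (m : Fin M) : Finset.univ.inf C.source ≤ C.coded m := by
  obtain ⟨f, hf⟩ := C.coded_fn m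
  intro ω ω' hω
  have hW : (fun k => C.W k ω) = fun k => C.W k ω' :=
    funext fun k => (FinProbSpace.finset_inf_ker_rel C.W _ ω ω').1 hω k (Finset.mem_univ k)
  rw [coded, Setoid.ker_def, hf, hf, hW]

theorem condEntropy_source_decSet (hS : S ∈ C.decSets k) :
    C.P.condEntropy (C.source k) (S.inf C.coded) = 0 := by
  rw [← C.decodes k S hS, FinProbSpace.condH_eq_condEntropy_ker, FinProbSpace.ker_tuple_coe]
  rfl

theorem condEntropy_decSet (hS : S ∈ C.decSets k) (hk : k ∉ T) :
    C.P.condEntropy (S.inf C.coded) (T.inf C.source) =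
      Lw + C.P.condEntropy (S.inf C.coded) ((insert k T).inf C.source) := by
  have hdecode : C.P.condEntropy (C.source k) (S.inf C.coded ⊓ T.inf C.source) = 0 :=
    le_antisymm
      (condEntropy_source_decSet hS ▸ FinProbSpace.condEntropy_mono_right _ inf_le_left)
      (FinProbSpace.condEntropy_nonneg _ _)
  calc C.P.condEntropy (S.inf C.coded) (T.inf C.source)
      = C.P.condEntropy (S.inf C.coded ⊓ C.source k) (T.inf C.source) := by
        rw [FinProbSpace.condEntropy_inf, hdecode, add_zero]
    _ = Lw + C.P.condEntropy (S.inf C.coded) ((insert k T).inf C.source) := by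
        rw [inf_comm, FinProbSpace.condEntropy_inf, condEntropy_source hk, Finset.inf_insert]

theorem mul_div_Cstar_card_compl (hN : 0 < N) (L : ℝ) (hk : k ∉ T) :
    N * (L / Cstar N Tᶜ.card) = L + L / Cstar N (insert k T)ᶜ.card := by
  have hcard : Tᶜ.card = (insert k T)ᶜ.card + 1 := by
    rw [Finset.compl_insert, Finset.card_erase_add_one (Finset.mem_compl.2 hk)]
  rw [hcard, mul_div_Cstar_succ hN]

theorem condEntropy_decSet_le (hN : 0 < N) (hS : S ∈ C.decSets k) (hk : k ∉ T)
    (hT : ∀ m, C.P.condEntropy (C.coded m) (T.inf C.source) ≤ Lw / Cstar N Tᶜ.card) :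
    C.P.condEntropy (S.inf C.coded) ((insert k T).inf C.source) ≤
      Lw / Cstar N (insert k T)ᶜ.card := by
  have hsum : C.P.condEntropy (S.inf C.coded) (T.inf C.source) ≤ N * (Lw / Cstar N Tᶜ.card) :=
    calc C.P.condEntropy (S.inf C.coded) (T.inf C.source)
        ≤ ∑ m ∈ S, C.P.condEntropy (C.coded m) (T.inf C.source) :=
          FinProbSpace.condEntropy_finset_inf_le_sum _ _ _
      _ ≤ S.card • (Lw / Cstar N Tᶜ.card) := Finset.sum_le_card_nsmul _ _ _ fun m _ => hT m
      _ = N * (Lw / Cstar N Tᶜ.card) := by rw [C.decSets_card k S hS, nsmul_eq_mul]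
  rw [condEntropy_decSet hS hk, mul_div_Cstar_card_compl hN Lw hk] at hsum
  exact le_of_add_le_add_left hsum

theorem condEntropy_coded_le (hN : 0 < N) (hC : C.IsUniversal) (hLx : Lx ≤ Lw / Cstar N K)
    (T : Finset (Fin K)) (m : Fin M) :
    C.P.condEntropy (C.coded m) (T.inf C.source) ≤ Lw / Cstar N Tᶜ.card := by
  induction T using Finset.induction_on generalizing m with
  | empty =>
    rwa [Finset.inf_empty, FinProbSpace.condEntropy_top_right, entropy_coded, Finset.compl_empty,
      Finset.card_univ, Fintype.card_fin]
  | insert k T hk ih =>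
    obtain ⟨S, hS, hmS⟩ := hC m k
    exact (FinProbSpace.condEntropy_anti_left (Finset.inf_le hmS) _).trans
      (condEntropy_decSet_le hN hS hk ih)

theorem le_condEntropy_decSet (hN : 0 < N) (hS : S ∈ C.decSets k) (hk : k ∉ T)
    (hT : ∀ m, Lw / Cstar N (insert k T)ᶜ.card ≤
      C.P.condEntropy (C.coded m) ((insert k T).inf C.source)) :
    N * (Lw / Cstar N Tᶜ.card) ≤ C.P.condEntropy (S.inf C.coded) (T.inf C.source) := by
  obtain ⟨m, hm⟩ : S.Nonempty := Finset.card_pos.1 (C.decSets_card k S hS ▸ hN)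
  rw [mul_div_Cstar_card_compl hN Lw hk, condEntropy_decSet hS hk]
  exact add_le_add_right
    ((hT m).trans (FinProbSpace.condEntropy_anti_left (Finset.inf_le hm) _)) _

theorem condEntropy_coded (hN : 0 < N) (hC : C.IsUniversal) (hLx : Lx ≤ Lw / Cstar N K)
    (T : Finset (Fin K)) (m : Fin M) :
    C.P.condEntropy (C.coded m) (T.inf C.source) = Lw / Cstar N Tᶜ.card := by
  induction T using WellFoundedGT.induction generalizing m with
  | _ T ih =>
    rcases eq_or_ne T Finset.univ with rfl | hT
    · rw [FinProbSpace.condEntropy_eq_zero_of_le (univ_inf_source_le_coded m)]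
      simp [Cstar]
    · obtain ⟨k, hk⟩ := not_forall.1 (mt Finset.eq_univ_of_forall hT)
      obtain ⟨S, hS, hmS⟩ := hC m k
      have hle := condEntropy_coded_le hN hC hLx T
      have hsum : ∑ _m ∈ S, Lw / Cstar N Tᶜ.card ≤
          ∑ m ∈ S, C.P.condEntropy (C.coded m) (T.inf C.source) :=
        calc ∑ _m ∈ S, Lw / Cstar N Tᶜ.card
            = N * (Lw / Cstar N Tᶜ.card) := by
              rw [Finset.sum_const, C.decSets_card k S hS, nsmul_eq_mul]
          _ ≤ C.P.condEntropy (S.inf C.coded) (T.inf C.source) :=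
              le_condEntropy_decSet hN hS hk fun m => (ih _ (Finset.ssubset_insert hk) m).ge
          _ ≤ ∑ m ∈ S, C.P.condEntropy (C.coded m) (T.inf C.source) :=
              FinProbSpace.condEntropy_finset_inf_le_sum _ _ _
      exact (Finset.sum_eq_sum_iff_of_le fun m _ => hle m).1
        ((Finset.sum_le_sum fun m _ => hle m).antisymm hsum) m hmS

theorem sameInfo_insert_of_mem_decSet (hN : 0 < N) (hC : C.IsUniversal)
    (hLx : Lx ≤ Lw / Cstar N K) (hS : S ∈ C.decSets k) (hk : k ∉ T) {i j : Fin M} (hi : i ∈ S)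
    (hj : j ∈ S) : C.sameInfo (insert k T) i j :=
  FinProbSpace.sameInfoSetoid_of_condEntropy_le (fun m _ =>
    (condEntropy_decSet_le hN hS hk (condEntropy_coded_le hN hC hLx T)).trans
      (condEntropy_coded hN hC hLx _ m).ge) hi hj

theorem eq_of_sameInfo_of_mem_decSet (hN : 0 < N) (hLw : 0 < Lw) (hC : C.IsUniversal)
    (hLx : Lx ≤ Lw / Cstar N K) (hS : S ∈ C.decSets k) (hk : k ∉ T) {i j : Fin M} (hi : i ∈ S)
    (hj : j ∈ S) (hij : C.sameInfo T i j) : i = j := by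
  by_contra hne
  have hindep : ∑ m ∈ S, C.P.condEntropy (C.coded m) (T.inf C.source) ≤
      C.P.condEntropy (S.inf C.coded) (T.inf C.source) := by
    simp only [condEntropy_coded hN hC hLx, Finset.sum_const, nsmul_eq_mul, C.decSets_card k S hS]
    exact le_condEntropy_decSet hN hS hk fun m => (condEntropy_coded hN hC hLx _ m).ge
  have hzero : Lw / Cstar N Tᶜ.card = 0 := by
    rw [← condEntropy_coded hN hC hLx T i,
      ← FinProbSpace.condEntropy_right_inf_eq_of_sum_le hindep hi hj hne]
    exact hij.1
  have hpos : 0 < Cstar N Tᶜ.card :=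
    Cstar_pos hN (Finset.card_pos.2 ⟨k, Finset.mem_compl.2 hk⟩)
  exact (div_pos hLw hpos).ne' hzero

theorem pow_le_card_quotient_sameInfo [Nonempty (Fin M)] (hN : 0 < N) (hLw : 0 < Lw)
    (hC : C.IsUniversal) (hLx : Lx ≤ Lw / Cstar N K) (T : Finset (Fin K)) :
    N ^ Tᶜ.card ≤ Nat.card (Quotient (C.sameInfo T)) := by
  induction T using WellFoundedGT.induction with
  | _ T ih =>
    rcases eq_or_ne T Finset.univ with rfl | hT
    · have : Nonempty (Quotient (C.sameInfo Finset.univ)) := Nonempty.map (Quotient.mk _) ‹_›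
      rw [Finset.compl_univ, Finset.card_empty, pow_zero]
      exact Nat.card_pos
    · obtain ⟨k, hk⟩ := not_forall.1 (mt Finset.eq_univ_of_forall hT)
      have hle : C.sameInfo T ≤ C.sameInfo (insert k T) := fun _ _ h =>
        FinProbSpace.sameInfoSetoid_anti (Finset.inf_mono (Finset.subset_insert k T)) h
      have hsplit := mul_card_quotient_le hle (n := N) fun m => by
        obtain ⟨S, hS, hmS⟩ := hC m k
        exact ⟨S, C.decSets_card k S hS,
          fun _ hi => sameInfo_insert_of_mem_decSet hN hC hLx hS hk hmS hi,
          fun _ hi _ hj => eq_of_sameInfo_of_mem_decSet hN hLw hC hLx hS hk hi hj⟩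
      calc N ^ Tᶜ.card = N * N ^ (insert k T)ᶜ.card := by
            rw [Finset.compl_insert, ← pow_succ',
              Finset.card_erase_add_one (Finset.mem_compl.2 hk)]
        _ ≤ N * Nat.card (Quotient (C.sameInfo (insert k T))) :=
            Nat.mul_le_mul_left N (ih _ (Finset.ssubset_insert hk))
        _ ≤ Nat.card (Quotient (C.sameInfo T)) := hsplit

theorem pow_le_length (hK : 0 < K) (hN : 0 < N) (hLw : 0 < Lw) (hC : C.IsUniversal)
    (hLx : Lx ≤ Lw / Cstar N K) : N ^ K ≤ M := by
  obtain ⟨S, hS⟩ := C.decSets_nonempty ⟨0, hK⟩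
  obtain ⟨m, -⟩ : S.Nonempty := Finset.card_pos.1 (C.decSets_card _ S hS ▸ hN)
  have : Nonempty (Fin M) := ⟨m⟩
  calc N ^ K = N ^ (∅ : Finset (Fin K))ᶜ.card := by simp
    _ ≤ Nat.card (Quotient (C.sameInfo ∅)) := pow_le_card_quotient_sameInfo hN hLw hC hLx ∅
    _ ≤ Nat.card (Fin M) := Nat.card_le_card_of_surjective _ Quotient.mk_surjective
    _ = M := Nat.card_fin M

end LDC

theorem Cstar_eq_pow_mul_div {N : ℕ} (hN : 1 < N) (d : ℕ) :
    Cstar N d = (N : ℝ) ^ d * (N - 1) / ((N : ℝ) ^ d - 1) := by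
  have hN_one : (N : ℝ) ≠ 1 := Nat.cast_ne_one.2 hN.ne'
  have hN_zero : (N : ℝ) ≠ 0 := Nat.cast_ne_zero.2 (zero_lt_one.trans hN).ne'
  have hsub : (N : ℝ) - 1 ≠ 0 := sub_ne_zero.2 hN_one
  have hgeom : ∑ j ∈ Finset.range d, (1 / (N : ℝ)) ^ j =
      N * (((N : ℝ) ^ d - 1) / ((N : ℝ) ^ d * (N - 1))) := by
    simp only [one_div]
    rw [geom_sum_inv hN_one hN_zero, inv_pow]
    field_simp
  rw [Cstar, hgeom, div_mul_cancel_left₀ hN_zero, inv_div]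

namespace FinProbSpace

/-- The uniform distribution on a finite nonempty type. -/
abbrev uniform (Ω : Type) [Fintype Ω] [Nonempty Ω] : FinProbSpace where
  Ω := Ω
  p _ := 1 / Fintype.card Ω
  nonneg _ := by positivity
  sum_one := by simp

variable {Ω B : Type} [Fintype Ω] [AddGroup Ω] [AddGroup B] [Fintype B] [DecidableEq B]

theorem prob_uniform_of_surjective (φ : Ω →+ B) (hφ : Function.Surjective φ) (b : B) :
    (uniform Ω).prob (α := B) φ b = 1 / Fintype.card B := by
  have hfib (c : B) : (Finset.univ.filter fun x => φ x = c).card =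
      (Finset.univ.filter fun x => φ x = b).card :=
    AddMonoidHom.card_fiber_eq_of_mem_range φ (hφ c) (hφ b)
  have hcard : Fintype.card Ω =
      Fintype.card B * (Finset.univ.filter fun x => φ x = b).card := by
    rw [← Finset.card_univ, Finset.card_eq_sum_card_fiberwise (f := φ) (t := Finset.univ)
      (fun _ _ => Finset.mem_coe.2 (Finset.mem_univ _)), Finset.sum_congr rfl fun c _ => hfib c]
    simp
  have hΩ : (Fintype.card Ω : ℝ) ≠ 0 := by simp
  have hB : (Fintype.card B : ℝ) ≠ 0 := by simp
  rw [prob_eq_sum_filter, Finset.sum_const, nsmul_eq_mul, mul_one_div, div_eq_div_iff hΩ hB,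
    one_mul, mul_comm]
  exact_mod_cast hcard.symm

theorem H_uniform_of_surjective (φ : Ω →+ B) (hφ : Function.Surjective φ) :
    (uniform Ω).H (α := B) φ = Real.logb 2 (Fintype.card B) := by
  have hB : (Fintype.card B : ℝ) ≠ 0 := by simp
  simp only [H, prob_uniform_of_surjective φ hφ, Finset.sum_const, Finset.card_univ,
    nsmul_eq_mul, one_div, Real.logb_inv]
  field_simp

theorem iIndep_uniform_eval {ι V : Type} [Fintype ι] [DecidableEq ι] [AddGroup V] [Fintype V]
    [DecidableEq V] : (uniform (ι → V)).iIndep fun i ω => ω i := by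
  intro a
  calc (uniform (ι → V)).prob (AddMonoidHom.id (ι → V)) a
      = 1 / Fintype.card (ι → V) := prob_uniform_of_surjective _ Function.surjective_id a
    _ = ∏ _i : ι, 1 / (Fintype.card V : ℝ) := by simp
    _ = ∏ i, (uniform (ι → V)).prob (fun ω => ω i) (a i) :=
        Finset.prod_congr rfl fun i _ => (prob_uniform_of_surjective
          (Pi.evalAddMonoidHom (fun _ : ι => V) i) (Function.surjective_eval i) (a i)).symm

end FinProbSpace

namespace GridCode

variable {K : ℕ} {G : Type}

section Line

variable [Fintype G] [DecidableEq G]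

/-- The line through the grid point `q` in direction `k`. -/
def line (k : Fin K) (q : Fin K → G) : Finset (Fin K → G) :=
  Finset.univ.image (Function.update q k)

theorem card_line (k : Fin K) (q : Fin K → G) : (line k q).card = Fintype.card G := by
  rw [line, Finset.card_image_of_injective _ (Function.update_injective q k), Finset.card_univ]

theorem self_mem_line (k : Fin K) (q : Fin K → G) : q ∈ line k q :=
  Finset.mem_image.2 ⟨q k, Finset.mem_univ _, Function.update_eq_self k q⟩

end Line

section Code

variable [AddCommGroup G]

/-- The values of a source symbol: for every shift `s : Fin K → G`, one bit for each nonzero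
element of `G`. -/
abbrev Source (K : ℕ) (G : Type) [AddCommGroup G] : Type :=
  (Fin K → G) → {t : G // t ≠ 0} → ZMod 2

variable [DecidableEq G]

/-- The bit of the coded symbol at the grid point `q` with coordinate `c`: the sum over `k` of the
bits of `W_k` for the shift `c - q` at position `c k`, those at position `0` being `0`. -/
def bit (q : Fin K → G) (w : Fin K → Source K G) (c : Fin K → G) : ZMod 2 :=
  ∑ k, if h : c k = 0 then 0 else w k (c - q) ⟨c k, h⟩

/-- The coded symbol at the grid point `q`. The coordinate `0`, at which every coded symbol
vanishes, is left out. -/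
def code (q : Fin K → G) : (Fin K → Source K G) →+ ({c : Fin K → G // c ≠ 0} → ZMod 2) where
  toFun w c := bit q w c
  map_zero' := by
    ext c
    simp [bit]
  map_add' v w := by
    ext c
    simp only [bit, Pi.add_apply, ← Finset.sum_add_distrib]
    exact Finset.sum_congr rfl fun k _ => by split <;> simp

theorem code_surjective (q : Fin K → G) : Function.Surjective (code q) := by
  intro v
  have hnonzero (c : {c : Fin K → G // c ≠ 0}) : ∃ k, c.1 k ≠ 0 := Function.ne_iff.1 c.2
  choose i hi using hnonzero
  let w (k : Fin K) (s : Fin K → G) (_ : {t : G // t ≠ 0}) : ZMod 2 :=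
    if h : s + q = 0 then 0 else if k = i ⟨s + q, h⟩ then v ⟨s + q, h⟩ else 0
  refine ⟨w, funext fun c => ?_⟩
  calc bit q w c = if h : c.1 (i c) = 0 then 0 else w (i c) (c - q) ⟨c.1 (i c), h⟩ :=
        Finset.sum_eq_single_of_mem _ (Finset.mem_univ _) fun k _ hk => by simp [w, c.2, hk]
    _ = v c := by simp [w, hi, c.2]

theorem bit_update_sub_bit_update (k : Fin K) (q : Fin K → G) (w : Fin K → Source K G)
    (s : Fin K → G) (t : {t : G // t ≠ 0}) :
    bit (Function.update q k (t - s k)) w (Function.update q k (t - s k) + s) -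
      bit (Function.update q k (-s k)) w (Function.update q k (-s k) + s) = w k s t := by
  rw [bit, bit, ← Finset.sum_sub_distrib, Finset.sum_eq_single_of_mem k (Finset.mem_univ k)]
  · simp [t.2]
  · intro j _ hj
    simp [Function.update_of_ne hj]

theorem eq_of_code_eq_on_line [Fintype G] {k : Fin K} {q : Fin K → G} {w w' : Fin K → Source K G}
    (h : ∀ p ∈ line k q, code p w = code p w') : w k = w' k := by
  have hbit (t : G) (c : Fin K → G) :
      bit (Function.update q k t) w c = bit (Function.update q k t) w' c := by
    by_cases hc : c = 0
    · simp [bit, hc]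
    · exact congrFun (h _ (Finset.mem_image_of_mem _ (Finset.mem_univ t))) ⟨c, hc⟩
  ext s t
  rw [← bit_update_sub_bit_update k q w s t, ← bit_update_sub_bit_update k q w' s t, hbit, hbit]

variable [Fintype G]

theorem H_code (q : Fin K → G) :
    (FinProbSpace.uniform (Fin K → Source K G)).H (code q) = (Fintype.card G : ℝ) ^ K - 1 := by
  rw [FinProbSpace.H_uniform_of_surjective _ (code_surjective q)]
  simp [Fintype.card_subtype_compl, Real.logb_pow, Nat.one_le_pow, Fintype.card_pos]

theorem H_source (k : Fin K) :
    (FinProbSpace.uniform (Fin K → Source K G)).H (fun w => w k) =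
      (Fintype.card G : ℝ) ^ K * (Fintype.card G - 1) :=
  (FinProbSpace.H_uniform_of_surjective (Pi.evalAddMonoidHom (fun _ : Fin K => Source K G) k)
    (Function.surjective_eval k)).trans <| by
      simp [Fintype.card_subtype_compl, Real.logb_pow, Nat.one_le_iff_ne_zero]

variable {N M : ℕ}

/-- The grid code, with its coded symbols numbered by `e`. The decoding sets for `W_k` are the
lines in direction `k`. -/
def ldc (hG : Fintype.card G = N) (e : Fin M ≃ (Fin K → G)) :
    LDC K N M ((N : ℝ) ^ K * (N - 1)) ((N : ℝ) ^ K - 1) where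
  P := FinProbSpace.uniform (Fin K → Source K G)
  V := Source K G
  V' := {c : Fin K → G // c ≠ 0} → ZMod 2
  W k w := w k
  X m := code (e m)
  indep := FinProbSpace.iIndep_uniform_eval
  HW k := hG ▸ H_source k
  coded_fn m := ⟨code (e m), fun _ => rfl⟩
  HX m := hG ▸ H_code (e m)
  decSets k := Finset.univ.image fun q => (line k q).map e.symm.toEmbedding
  decSets_nonempty _ := Finset.univ_nonempty.image _
  decSets_card k S hS := by
    obtain ⟨q, -, rfl⟩ := Finset.mem_image.1 hS
    rw [Finset.card_map, card_line, hG]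
  decodes k S hS := by
    obtain ⟨q, -, rfl⟩ := Finset.mem_image.1 hS
    rw [FinProbSpace.condH_eq_condEntropy_ker]
    refine FinProbSpace.condEntropy_eq_zero_of_le fun w w' hw => ?_
    refine eq_of_code_eq_on_line (q := q) fun p hp => ?_
    simpa [FinProbSpace.tuple] using congrFun hw ⟨e.symm p, Finset.mem_map_of_mem _ hp⟩

theorem ldc_isUniversal (hG : Fintype.card G = N) (e : Fin M ≃ (Fin K → G)) :
    (ldc hG e).IsUniversal := fun m k =>
  ⟨(line k (e m)).map e.symm.toEmbedding, Finset.mem_image_of_mem _ (Finset.mem_univ _),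
    Finset.mem_map.2 ⟨e m, self_mem_line k (e m), e.symm_apply_apply m⟩⟩

end Code

theorem exists_isUniversal_ldc {N : ℕ} (hK : 1 ≤ K) (hN : 2 ≤ N) :
    ∃ (Lw Lx : ℝ), 0 < Lw ∧ 0 < Lx ∧
      ∃ C : LDC K N (N ^ K) Lw Lx, C.IsUniversal ∧ Lw / Lx = Cstar N K := by
  have hN' : (1 : ℝ) < N := Nat.one_lt_cast.2 hN
  have hpow : (1 : ℝ) < (N : ℝ) ^ K := one_lt_pow₀ hN' (Nat.one_le_iff_ne_zero.1 hK)
  have : NeZero N := ⟨(zero_lt_two.trans_le hN).ne'⟩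
  have hcard : Fintype.card (Fin K → ZMod N) = N ^ K := by simp [ZMod.card]
  exact ⟨_, _, mul_pos (zero_lt_one.trans hpow) (sub_pos.2 hN'), sub_pos.2 hpow,
    ldc (ZMod.card N) (Fintype.equivFinOfCardEq hcard).symm, ldc_isUniversal _ _,
    (Cstar_eq_pow_mul_div hN K).symm⟩

end GridCode

/-- Minimum length of capacity achieving ULDCs, Theorem 2: for `N ≥ 2`,
`K ≥ 1`, the least code length `M` for which there exists a ULDC with locality `N`, `K`
source symbols and symbol rate `C*(N, K)` is `N^K`. -/
theorem uldc_min_length (K N : ℕ) (hK : 1 ≤ K) (hN : 2 ≤ N) :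
    IsLeast {M : ℕ | ∃ (Lw Lx : ℝ), 0 < Lw ∧ 0 < Lx ∧
      ∃ C : LDC K N M Lw Lx, C.IsUniversal ∧ Lw / Lx = Cstar N K} (N ^ K) := by
  refine ⟨GridCode.exists_isUniversal_ldc hK hN, ?_⟩
  rintro M ⟨Lw, Lx, hLw, -, C, hC, hrate⟩
  have hLx : Lx ≤ Lw / Cstar N K := by rw [← hrate, div_div_cancel₀ hLw.ne']
  exact LDC.pow_le_length hK (zero_lt_two.trans_le hN) hLw hC hLx
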